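/- Consider the episodic interaction process over K episodes with adapted action choices, and let {W_h^i ∈ R^S : 1 ≤ i ≤ K, 1 ≤ h ≤ H+1} and {u_h^i(s,a,N) ∈ R} satisfy: (i) W_h^i is measurable with respect to the samples collected up to the end of step h−1 of episode i; (ii) ||W_h^i||_∞ ≤ C_w; (iii) u_h^i(s,a,N) is measurable with respect to the samples up to the end of step h−1 of episode i together with a given positive integer N ∈ [K]; (iv) 0 ≤ u_h^i(s,a,N) ≤ C_u; (v) 0 ≤ Σ_{n=1}^{N_h^k(s,a)} u_h^{k_h^n(s,a)}(s,a,N) ≤ 2 for all k. Define X_i(s,a,h,N) = u_h^i(s,a,N) · (P_h^i − P_{h,s,a}) W_{h+1}^i · 1{(s_h^i, a_h^i) = (s,a)}. Then for any δ ∈ (0,1), there is a universal constant C > 0 such that with probability at least 1 − δ, simultaneously for all (k, h, s, a, N) ∈ [K] × [H] × S × A × [K]: |Σ_{i=1}^{k} X_i(s,a,h,N)| ≤ C · ( sqrt(C_u · log²(SAT/δ)) · sqrt( Σ_{n=1}^{N_h^k(s,a)} u_h^{k_h^n(s,a)}(s,a,N) · Var_{h,s,a}(W_{h+1}^{k_h^n(s,a)})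 ) + (C_u·C_w + sqrt(C_u/N)·C_w) · log²(SAT/δ) ). -/

import Mathlib

open MeasureTheory Finset

/-- A finite-horizon MDP with horizon `H`, non-stationary transition kernels `P h s a ·`,
and deterministic rewards `r h s a ∈ [0,1]`. -/
structure MDP (S A : Type) [Fintype S] [Fintype A] where
  H : ℕ
  P : ℕ → S → A → S → ℝ
  r : ℕ → S → A → ℝ
  H_pos : 1 ≤ H
  P_nonneg : ∀ h s a s', 0 ≤ P h s a s'
  P_sum_one : ∀ h s a, ∑ s', P h s a s' = 1
  r_nonneg : ∀ h s a, 0 ≤ r h s a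
  r_le_one : ∀ h s a, r h s a ≤ 1

namespace MDP

variable {S A : Type} [Fintype S] [Fintype A] [Nonempty S] [Nonempty A]

/-- Optimal Q-function, defined by backward induction on the remaining number of steps
(`Qstar` below instantiates the fuel as `H + 1 - h`, so that values at step `H + 1`
vanish and the Bellman optimality equation holds for `1 ≤ h ≤ H`). -/
noncomputable def QstarAux (M : MDP S A) : ℕ → ℕ → S → A → ℝ
  | 0, _, _, _ => 0
  | (fuel + 1), h, s, a =>
      M.r h s a + ∑ s' : S, M.P h s a s' *
        (Finset.univ.sup' Finset.univ_nonempty fun a' => QstarAux M fuel (h + 1) s' a')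

/-- The optimal Q-function `Q_h^⋆`. -/
noncomputable def Qstar (M : MDP S A) (h : ℕ) (s : S) (a : A) : ℝ :=
  QstarAux M (M.H + 1 - h) h s a

/-- The optimal value function `V_h^⋆`. -/
noncomputable def Vstar (M : MDP S A) (h : ℕ) (s : S) : ℝ :=
  Finset.univ.sup' Finset.univ_nonempty fun a => M.Qstar h s a

/-- Value function `V_h^π` of a deterministic policy `π`, by backward induction. -/
noncomputable def VpolAux (M : MDP S A) (π : ℕ → S → A) : ℕ → ℕ → S → ℝ
  | 0, _, _ => 0
  | (fuel + 1), h, s =>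
      M.r h s (π h s) + ∑ s' : S, M.P h s (π h s) s' * VpolAux M π fuel (h + 1) s'

/-- The value function `V_h^π` of a deterministic policy `π`. -/
noncomputable def Vpol (M : MDP S A) (π : ℕ → S → A) (h : ℕ) (s : S) : ℝ :=
  VpolAux M π (M.H + 1 - h) h s

/-- Conditional variance `Var_{h,s,a}(V) = P_{h,s,a}(V²) - (P_{h,s,a} V)²`. -/
noncomputable def varP (M : MDP S A) (h : ℕ) (s : S) (a : A) (V : S → ℝ) : ℝ :=
  (∑ s' : S, M.P h s a s' * (V s') ^ 2) - (∑ s' : S, M.P h s a s' * V s') ^ 2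

end MDP

/-- The Q-learning rate `η_n = (H+1)/(H+n)`. -/
noncomputable def lr (H n : ℕ) : ℝ := (H + 1 : ℝ) / (H + n)

/-- `η_n^N`: equal to `η_n ∏_{i=n+1}^N (1 - η_i)` for `1 ≤ n ≤ N` (hence `η_n` for `N = n`),
`0` for `N < n`, and `η_0^N = ∏_{i=1}^N (1 - η_i)` (which is `1` if `N = 0` and `0` otherwise,
since `1 - η_1 = 0`). -/
noncomputable def lrProd (H n N : ℕ) : ℝ :=
  if N < n then 0
  else (if n = 0 then 1 else lr H n) * ∏ i ∈ Finset.Icc (n + 1) N, (1 - lr H i)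

/-- The log factor `log(SAT/δ)` with `T = KH`. -/
noncomputable def iota (S A : Type) [Fintype S] [Fintype A] (K H : ℕ) (δ : ℝ) : ℝ :=
  Real.log ((Fintype.card S : ℝ) * (Fintype.card A) * (K * H) / δ)

/-- The trajectory `(s_h^k, a_h^k)` is generated by online interaction with the MDP `M`:
states and actions are adapted to the filtration `𝓕` (with time index `(k-1)H + h`
corresponding to step `h` of episode `k`), and conditionally on the history,
`s_{h+1}^k ∼ P_h(· | s_h^k, a_h^k)`. -/
def IsMDPTrajectory {S A : Type} [Fintype S] [Fintype A] [DecidableEq S]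
    [MeasurableSpace S] [MeasurableSpace A]
    {Ω : Type} [m0 : MeasurableSpace Ω] (μ : Measure Ω)
    (M : MDP S A) (K : ℕ) (𝓕 : Filtration ℕ m0)
    (st : ℕ → ℕ → Ω → S) (ac : ℕ → ℕ → Ω → A) : Prop :=
  (∀ k ∈ Finset.Icc 1 K, ∀ h ∈ Finset.Icc 1 (M.H + 1),
      Measurable[𝓕 ((k - 1) * M.H + h)] (st k h)) ∧
  (∀ k ∈ Finset.Icc 1 K, ∀ h ∈ Finset.Icc 1 M.H,
      Measurable[𝓕 ((k - 1) * M.H + h)] (ac k h)) ∧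
  (∀ k ∈ Finset.Icc 1 K, ∀ h ∈ Finset.Icc 1 M.H, ∀ s' : S,
      μ[(fun ω => if st k (h + 1) ω = s' then (1 : ℝ) else 0) | 𝓕 ((k - 1) * M.H + h)]
        =ᵐ[μ] fun ω => M.P h (st k h ω) (ac k h ω) s')

/-- `N_h^k(s,a)`: the number of episodes `j ∈ {1,…,k}` in which the pair `(s,a)` is
visited at step `h`. -/
def Nvisit {S A : Type} [DecidableEq S] [DecidableEq A]
    (st : ℕ → ℕ → S) (ac : ℕ → ℕ → A) (k h : ℕ) (s : S) (a : A) : ℕ :=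
  ((Finset.Icc 1 k).filter fun j => st j h = s ∧ ac j h = a).card

/-- `k_h^n(s,a)`: the index of the episode in which `(s,a)` is visited for the `n`-th
time at step `h` (the least `k` with `N_h^k(s,a) ≥ n`). -/
noncomputable def kvisit {S A : Type} [DecidableEq S] [DecidableEq A]
    (st : ℕ → ℕ → S) (ac : ℕ → ℕ → A) (n h : ℕ) (s : S) (a : A) : ℕ :=
  sInf {k | n ≤ Nvisit st ac k h s a}

/-- Reindexing of a sum over visits by the visit number. -/
lemma visit_sum_reindex (p : ℕ → Prop) [DecidablePred p] (f : ℕ → ℝ) (k : ℕ) :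
    ∑ n ∈ Icc 1 (((Icc 1 k).filter p).card), f (sInf {k' | n ≤ ((Icc 1 k').filter p).card})
      = ∑ i ∈ Icc 1 k, f i * (if p i then 1 else 0) := by
  induction k with
  | zero => simp
  | succ k ih =>
    rw [Finset.sum_Icc_succ_top (by omega : 1 ≤ k + 1), ← ih]
    have hI : Icc 1 (k + 1) = insert (k + 1) (Icc 1 k) := by
      ext x; simp only [mem_insert, mem_Icc]; omega
    have hmono : ∀ k', k' ≤ k → ((Icc 1 k').filter p).card ≤ ((Icc 1 k).filter p).card := by
      intro k' hk'
      apply Finset.card_le_card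
      apply Finset.filter_subset_filter
      exact Finset.Icc_subset_Icc_right hk'
    by_cases hp : p (k + 1)
    · have hc : ((Icc 1 (k + 1)).filter p).card = ((Icc 1 k).filter p).card + 1 := by
        rw [hI, Finset.filter_insert, if_pos hp, Finset.card_insert_of_notMem]
        simp
      rw [hc, Finset.sum_Icc_succ_top (by omega)]
      have hs : sInf {k' | ((Icc 1 k).filter p).card + 1 ≤ ((Icc 1 k').filter p).card} = k + 1 := by
        apply le_antisymm
        · apply Nat.sInf_le
          simp only [Set.mem_ofPred_eq]; rw [hc]
        · apply le_csInf ⟨k + 1, by simp only [Set.mem_ofPred_eq]; rw [hc]⟩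
          intro b hb
          by_contra hlt
          have := hmono b (by omega)
          simp only [Set.mem_ofPred_eq] at hb
          omega
      rw [hs]; simp [hp]
    · have hc : ((Icc 1 (k + 1)).filter p).card = ((Icc 1 k).filter p).card := by
        rw [hI, Finset.filter_insert, if_neg hp]
      rw [hc]; simp [hp]

/-- Evaluating the conditional law of a finitely valued variable. -/
lemma integral_eval_condLaw {S Ω : Type} [Fintype S] [DecidableEq S] [MeasurableSpace S]
    [MeasurableSingletonClass S] (m : MeasurableSpace Ω) {m0 : MeasurableSpace Ω}
    (μ : Measure Ω) [IsProbabilityMeasure μ] (hm : m ≤ m0) (B : Ω → S) (hB : Measurable B)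
    (p : Ω → S → ℝ)
    (hp : ∀ s, μ[(fun ω => if B ω = s then (1 : ℝ) else 0) | m] =ᵐ[μ] fun ω => p ω s)
    (G : Ω → S → ℝ) (hG : ∀ s, Measurable[m] (fun ω => G ω s)) (c : ℝ)
    (hc : ∀ ω s, |G ω s| ≤ c) :
    ∫ ω, G ω (B ω) ∂μ = ∫ ω, ∑ s, G ω s * p ω s ∂μ := by
  have hind : ∀ s, Measurable (fun ω => if B ω = s then (1 : ℝ) else 0) := fun s =>
    Measurable.ite (hB (measurableSet_singleton s)) measurable_const measurable_const
  have hindI : ∀ s, Integrable (fun ω => if B ω = s then (1 : ℝ) else 0) μ := fun s =>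
    Integrable.of_bound (hind s).aestronglyMeasurable 1
      (Filter.Eventually.of_forall fun ω => by split_ifs <;> simp)
  have hGm : ∀ s, StronglyMeasurable[m] (fun ω => G ω s) := fun s => (hG s).stronglyMeasurable
  have hprodI : ∀ s, Integrable (fun ω => G ω s * (if B ω = s then (1 : ℝ) else 0)) μ := fun s =>
    (hindI s).bdd_mul ((hGm s).mono hm).aestronglyMeasurable
      (Filter.Eventually.of_forall fun ω => by simpa using hc ω s)
  have hpI : ∀ s, Integrable (fun ω => p ω s) μ := fun s =>
    (integrable_condExp (m := m) (μ := μ)).congr (hp s)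
  have hGpI : ∀ s, Integrable (fun ω => G ω s * p ω s) μ := fun s =>
    (hpI s).bdd_mul ((hGm s).mono hm).aestronglyMeasurable
      (Filter.Eventually.of_forall fun ω => by simpa using hc ω s)
  have h1 : ∀ ω, G ω (B ω) = ∑ s, G ω s * (if B ω = s then (1 : ℝ) else 0) := by
    intro ω; simp
  simp_rw [h1]
  rw [integral_finsetSum _ (fun s _ => hprodI s), integral_finsetSum _ (fun s _ => hGpI s)]
  refine Finset.sum_congr rfl fun s _ => ?_
  rw [← integral_condExp hm]
  apply integral_congr_ae
  have h2 := condExp_mul_of_stronglyMeasurable_left (μ := μ) (hGm s) (hprodI s) (hindI s)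
  filter_upwards [h2, hp s] with ω h2 h3
  have h2' : (μ[fun ω => G ω s * (if B ω = s then (1 : ℝ) else 0) | m]) ω
      = G ω s * (μ[fun ω => if B ω = s then (1 : ℝ) else 0 | m]) ω := h2
  rw [h2', h3]

/-- The exponential supermartingale bound. -/
lemma exp_supermartingale {S Ω : Type} [Fintype S] [DecidableEq S] [MeasurableSpace S]
    [MeasurableSingletonClass S] {m0 : MeasurableSpace Ω} (μ : Measure Ω) [IsProbabilityMeasure μ]
    (𝓕 : Filtration ℕ m0) (t : ℕ → ℕ) (ht : ∀ i, 1 ≤ i → t i + 1 ≤ t (i + 1)) (K : ℕ)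
    (B : ℕ → Ω → S) (hB : ∀ i ∈ Icc 1 K, Measurable[𝓕 (t i + 1)] (B i))
    (p : ℕ → Ω → S → ℝ) (hp0 : ∀ i ω s, 0 ≤ p i ω s)
    (hp : ∀ i ∈ Icc 1 K, ∀ s,
      μ[(fun ω => if B i ω = s then (1 : ℝ) else 0) | 𝓕 (t i)] =ᵐ[μ] fun ω => p i ω s)
    (E : ℕ → Ω → S → ℝ) (hE : ∀ i ∈ Icc 1 K, ∀ s, Measurable[𝓕 (t i)] (fun ω => E i ω s))
    (b : ℝ) (hb : ∀ i ω s, |E i ω s| ≤ b)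
    (hle : ∀ i ω, ∑ s, p i ω s * Real.exp (E i ω s) ≤ 1) (k : ℕ) (hk : k ≤ K) :
    Integrable (fun ω => Real.exp (∑ i ∈ Icc 1 k, E i ω (B i ω))) μ ∧
    ∫ ω, Real.exp (∑ i ∈ Icc 1 k, E i ω (B i ω)) ∂μ ≤ 1 := by
  have hEB : ∀ i ∈ Icc 1 K, Measurable[𝓕 (t i + 1)] (fun ω => E i ω (B i ω)) := by
    intro i hi
    have h1 : (fun ω => E i ω (B i ω))
        = fun ω => ∑ s, E i ω s * (if B i ω = s then (1 : ℝ) else 0) := by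
      ext ω; simp
    rw [h1]
    refine Finset.measurable_fun_sum _ fun s _ => ?_
    refine Measurable.mul ((hE i hi s).mono (𝓕.mono (by omega)) le_rfl) ?_
    exact Measurable.ite (hB i hi (measurableSet_singleton s)) measurable_const measurable_const
  have htm : ∀ i j, 1 ≤ i → i < j → t i + 1 ≤ t j := by
    intro i j hi hij
    induction j, hij using Nat.le_induction with
    | base => exact ht i hi
    | succ j hj ih =>
      have := ht j (by omega)
      omega
  have hD : ∀ k n, k ≤ K → (∀ i ∈ Icc 1 k, t i + 1 ≤ n) →
      Measurable[𝓕 n] (fun ω => Real.exp (∑ i ∈ Icc 1 k, E i ω (B i ω))) := by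
    intro k n hk hn
    refine Real.measurable_exp.comp ?_
    refine Finset.measurable_fun_sum _ fun i hi => ?_
    have hi' : i ∈ Icc 1 K := by simp only [mem_Icc] at *; omega
    exact (hEB i hi').mono (𝓕.mono (hn i hi)) le_rfl
  have hbound : ∀ k ω, |Real.exp (∑ i ∈ Icc 1 k, E i ω (B i ω))| ≤ Real.exp (k * b) := by
    intro k ω
    rw [Real.abs_exp]
    apply Real.exp_le_exp.2
    calc _ ≤ ∑ i ∈ Icc 1 k, b := Finset.sum_le_sum fun i _ => (le_abs_self _).trans (hb i ω _)
      _ = k * b := by simp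
  have hInt : ∀ k ≤ K, Integrable (fun ω => Real.exp (∑ i ∈ Icc 1 k, E i ω (B i ω))) μ := by
    intro k hk
    refine Integrable.of_bound (C := Real.exp (k * b)) ?_ ?_
    · have := hD k (t (k + 1)) hk (fun i hi => by
        simp only [mem_Icc] at hi; exact htm _ _ hi.1 (by omega))
      exact (this.mono (𝓕.le _) le_rfl).aestronglyMeasurable
    · exact Filter.Eventually.of_forall fun ω => hbound k ω
  refine ⟨hInt k hk, ?_⟩
  induction k with
  | zero => simp
  | succ k ih =>
    refine le_trans ?_ (ih (by omega))
    have hk1 : k + 1 ∈ Icc 1 K := by simp only [mem_Icc]; omega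
    have hDk := hD k (t (k + 1)) (by omega) (fun i hi => by
        simp only [mem_Icc] at hi; exact htm _ _ hi.1 (by omega))
    have key := integral_eval_condLaw (𝓕 (t (k + 1))) μ (𝓕.le _) (B (k + 1))
      ((hB (k + 1) hk1).mono (𝓕.le _) le_rfl) (p (k + 1)) (hp (k + 1) hk1)
      (fun ω s => Real.exp (∑ i ∈ Icc 1 k, E i ω (B i ω)) * Real.exp (E (k + 1) ω s))
      (fun s => hDk.mul (Real.measurable_exp.comp (hE (k + 1) hk1 s)))
      (Real.exp (k * b) * Real.exp b)
      (fun ω s => by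
        rw [abs_mul]
        refine mul_le_mul (hbound k ω) ?_ (abs_nonneg _) (Real.exp_pos _).le
        rw [Real.abs_exp]
        exact Real.exp_le_exp.2 ((le_abs_self _).trans (hb _ _ _)))
    have h2 : ∀ ω, Real.exp (∑ i ∈ Icc 1 (k + 1), E i ω (B i ω))
        = Real.exp (∑ i ∈ Icc 1 k, E i ω (B i ω)) * Real.exp (E (k + 1) ω (B (k + 1) ω)) := by
      intro ω
      rw [Finset.sum_Icc_succ_top (by omega), Real.exp_add]
    simp_rw [h2]
    rw [key]
    apply integral_mono_of_nonneg
    · refine Filter.Eventually.of_forall fun ω => ?_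
      exact Finset.sum_nonneg fun s _ => mul_nonneg (by positivity) (hp0 _ _ _)
    · exact hInt k (by omega)
    · refine Filter.Eventually.of_forall fun ω => ?_
      have h3 : ∑ s, Real.exp (∑ i ∈ Icc 1 k, E i ω (B i ω)) * Real.exp (E (k + 1) ω s)
            * p (k + 1) ω s
          = Real.exp (∑ i ∈ Icc 1 k, E i ω (B i ω))
            * ∑ s, p (k + 1) ω s * Real.exp (E (k + 1) ω s) := by
        rw [Finset.mul_sum]
        exact Finset.sum_congr rfl fun s _ => by ring
      simp only [h3]
      exact mul_le_of_le_one_right (Real.exp_pos _).le (hle _ _)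

/-- Chernoff bound from an exponential moment bound. -/
lemma chernoff_of_exp {Ω : Type} {m0 : MeasurableSpace Ω} (μ : Measure Ω)
    [IsProbabilityMeasure μ] (Y : Ω → ℝ) (hI : Integrable (fun ω => Real.exp (Y ω)) μ)
    (hle : ∫ ω, Real.exp (Y ω) ∂μ ≤ 1) (L : ℝ) :
    μ {ω | L ≤ Y ω} ≤ ENNReal.ofReal (Real.exp (-L)) := by
  have h := mul_meas_ge_le_integral_of_nonneg
    (Filter.Eventually.of_forall fun ω => (Real.exp_pos (Y ω)).le) hI (Real.exp L)
  have hs : {ω | Real.exp L ≤ Real.exp (Y ω)} = {ω | L ≤ Y ω} := by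
    ext ω; simp
  rw [hs] at h
  rw [ENNReal.le_ofReal_iff_toReal_le (measure_ne_top _ _) (Real.exp_pos _).le]
  change μ.real _ ≤ _
  have h1 : Real.exp (-L) * (Real.exp L * μ.real {ω | L ≤ Y ω}) ≤ Real.exp (-L) * 1 :=
    mul_le_mul_of_nonneg_left (h.trans hle) (Real.exp_pos _).le
  rwa [← mul_assoc, ← Real.exp_add, neg_add_cancel, Real.exp_zero, one_mul, mul_one] at h1

lemma varP_eq {S A : Type} [Fintype S] [Fintype A] (M : MDP S A) (h : ℕ) (s : S) (a : A)
    (V : S → ℝ) :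
    M.varP h s a V = ∑ s', M.P h s a s' * (V s' - ∑ x, M.P h s a x * V x) ^ 2 := by
  unfold MDP.varP
  set m := ∑ x, M.P h s a x * V x with hm
  have : ∀ s', M.P h s a s' * (V s' - m) ^ 2
      = M.P h s a s' * V s' ^ 2 - 2 * m * (M.P h s a s' * V s') + m ^ 2 * M.P h s a s' := by
    intro s'; ring
  simp_rw [this]
  rw [Finset.sum_add_distrib, Finset.sum_sub_distrib, ← Finset.mul_sum, ← Finset.mul_sum,
    M.P_sum_one, ← hm]
  ring

lemma varP_nonneg {S A : Type} [Fintype S] [Fintype A] (M : MDP S A) (h : ℕ) (s : S) (a : A)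
    (V : S → ℝ) : 0 ≤ M.varP h s a V := by
  rw [varP_eq]
  exact Finset.sum_nonneg fun s' _ => mul_nonneg (M.P_nonneg _ _ _ _) (sq_nonneg _)

lemma varP_le {S A : Type} [Fintype S] [Fintype A] (M : MDP S A) (h : ℕ) (s : S) (a : A)
    (V : S → ℝ) (c : ℝ) (hc : ∀ s', |V s'| ≤ c) : M.varP h s a V ≤ c ^ 2 := by
  unfold MDP.varP
  have h1 : ∑ s', M.P h s a s' * V s' ^ 2 ≤ ∑ s', M.P h s a s' * c ^ 2 := by
    refine Finset.sum_le_sum fun s' _ => mul_le_mul_of_nonneg_left ?_ (M.P_nonneg _ _ _ _)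
    exact sq_le_sq' (abs_le.1 (hc s')).1 (abs_le.1 (hc s')).2
  rw [← Finset.sum_mul, M.P_sum_one, one_mul] at h1
  nlinarith [sq_nonneg (∑ s', M.P h s a s' * V s')]

lemma abs_mean_le {S A : Type} [Fintype S] [Fintype A] (M : MDP S A) (h : ℕ) (s : S) (a : A)
    (V : S → ℝ) (c : ℝ) (hc : ∀ s', |V s'| ≤ c) : |∑ s', M.P h s a s' * V s'| ≤ c := by
  calc _ ≤ ∑ s', |M.P h s a s' * V s'| := Finset.abs_sum_le_sum_abs _ _
    _ ≤ ∑ s', M.P h s a s' * c := by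
      refine Finset.sum_le_sum fun s' _ => ?_
      rw [abs_mul, abs_of_nonneg (M.P_nonneg _ _ _ _)]
      exact mul_le_mul_of_nonneg_left (hc s') (M.P_nonneg _ _ _ _)
    _ = c := by rw [← Finset.sum_mul, M.P_sum_one, one_mul]

/-- One-step Bernstein moment generating function bound. -/
lemma one_step_mgf {S A : Type} [Fintype S] [Fintype A] (M : MDP S A) (h : ℕ) (s : S) (a : A)
    (V : S → ℝ) (l : ℝ) (hl : ∀ s', |l * (V s' - ∑ x, M.P h s a x * V x)| ≤ 1) :
    ∑ s', M.P h s a s' * Real.exp (l * (V s' - ∑ x, M.P h s a x * V x)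
      - l ^ 2 * M.varP h s a V) ≤ 1 := by
  set m := ∑ x, M.P h s a x * V x with hm
  have h1 : ∑ s', M.P h s a s' * Real.exp (l * (V s' - m)) ≤ 1 + l ^ 2 * M.varP h s a V := by
    calc _ ≤ ∑ s', M.P h s a s' * (1 + l * (V s' - m) + (l * (V s' - m)) ^ 2) := by
          refine Finset.sum_le_sum fun s' _ => mul_le_mul_of_nonneg_left ?_ (M.P_nonneg _ _ _ _)
          have := (abs_le.1 (Real.abs_exp_sub_one_sub_id_le (hl s'))).2
          linarith
      _ = ∑ s', ((1 - l * m) * M.P h s a s' + l * (M.P h s a s' * V s')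
            + l ^ 2 * (M.P h s a s' * (V s' - m) ^ 2)) := by
          refine Finset.sum_congr rfl fun s' _ => by ring
      _ = _ := by
          rw [Finset.sum_add_distrib, Finset.sum_add_distrib, ← Finset.mul_sum, ← Finset.mul_sum,
            ← Finset.mul_sum, M.P_sum_one, ← hm, varP_eq, ← hm]
          ring
  have h2 : 1 + l ^ 2 * M.varP h s a V ≤ Real.exp (l ^ 2 * M.varP h s a V) := by
    linarith [Real.add_one_le_exp (l ^ 2 * M.varP h s a V)]
  have h3 : ∑ s', M.P h s a s' * Real.exp (l * (V s' - m) - l ^ 2 * M.varP h s a V)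
      = (∑ s', M.P h s a s' * Real.exp (l * (V s' - m)))
        * Real.exp (- (l ^ 2 * M.varP h s a V)) := by
    rw [Finset.sum_mul]
    refine Finset.sum_congr rfl fun s' _ => ?_
    rw [sub_eq_add_neg, Real.exp_add]; ring
  rw [h3]
  calc _ ≤ Real.exp (l ^ 2 * M.varP h s a V) * Real.exp (- (l ^ 2 * M.varP h s a V)) :=
        mul_le_mul_of_nonneg_right (h1.trans h2) (Real.exp_pos _).le
    _ = 1 := by rw [← Real.exp_add]; simp

/-- The deterministic optimization over the grid of exponents. -/
lemma grid_opt (K : ℕ) (V R L X : ℝ) (hV : 0 ≤ V) (hR : 0 < R) (hL : 1 ≤ L)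
    (hVK : V ≤ K * R ^ 2)
    (hX : ∀ j ∈ Icc 1 (K + 1), ∀ σ ∈ ({1, -1} : Finset ℝ),
      (σ / (R * j)) * X - (σ / (R * j)) ^ 2 * V < L) :
    |X| ≤ 2 * Real.sqrt (V * L) + L * R := by
  set q := Real.sqrt (V * L) / (L * R) with hq
  have hq0 : 0 ≤ q := by positivity
  have hsq : Real.sqrt (V * L) ^ 2 = V * L := Real.sq_sqrt (by positivity)
  have hqK : q ≤ K := by
    rw [hq, div_le_iff₀ (by positivity)]
    apply Real.sqrt_le_iff.2 ⟨by positivity, ?_⟩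
    rcases Nat.eq_zero_or_pos K with h0 | h0
    · subst h0
      have : V = 0 := le_antisymm (by simpa using hVK) hV
      rw [this]; simp
    have hK1 : (1 : ℝ) ≤ K := by exact_mod_cast h0
    calc V * L ≤ (K * R ^ 2) * L := by gcongr
      _ ≤ (K * R ^ 2) * L * (K * L) :=
          le_mul_of_one_le_right (by positivity) (one_le_mul_of_one_le_of_one_le hK1 hL)
      _ = (K * (L * R)) ^ 2 := by ring
  set j := ⌊q⌋₊ + 1 with hj
  have hjmem : j ∈ Icc 1 (K + 1) := by
    have : ⌊q⌋₊ ≤ K := Nat.floor_le_of_le hqK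
    simp only [mem_Icc]; omega
  have hj1 : q ≤ (j : ℝ) := by
    have := (Nat.lt_floor_add_one q).le
    push_cast [hj]; exact this
  have hj2 : (j : ℝ) ≤ q + 1 := by
    have := Nat.floor_le hq0
    push_cast [hj]; linarith
  have hjpos : (0 : ℝ) < j := by push_cast [hj]; positivity
  have hgen : ∀ σ ∈ ({1, -1} : Finset ℝ), σ * X ≤ V / (R * j) + L * (R * j) := by
    intro σ hσ
    have h := hX j hjmem σ hσ
    have hσ2 : σ ^ 2 = 1 := by
      simp only [mem_insert, mem_singleton] at hσ
      rcases hσ with h | h <;> rw [h] <;> norm_num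
    have hr : 0 < R * j := by positivity
    rw [div_pow, hσ2] at h
    have h' := mul_le_mul_of_nonneg_left h.le hr.le
    have e1 : R * j * (σ / (R * j) * X - 1 / (R * j) ^ 2 * V) = σ * X - V / (R * j) := by
      field_simp
    rw [e1] at h'
    linarith
  have hbd : V / (R * j) + L * (R * j) ≤ 2 * Real.sqrt (V * L) + L * R := by
    have e2 : L * R * q = Real.sqrt (V * L) := by rw [hq]; field_simp
    have h1 : L * (R * j) ≤ Real.sqrt (V * L) + L * R := by
      calc L * (R * j) = L * R * j := by ring
        _ ≤ L * R * (q + 1) := by gcongr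
        _ = _ := by rw [mul_add, e2, mul_one]
    have h2 : V / (R * j) ≤ Real.sqrt (V * L) := by
      rw [div_le_iff₀ (by positivity)]
      have h3 : Real.sqrt (V * L) * (R * q) ≤ Real.sqrt (V * L) * (R * j) := by gcongr
      have h4 : Real.sqrt (V * L) * (R * q) = V := by
        have : L * (Real.sqrt (V * L) * (R * q)) = L * V := by
          calc _ = Real.sqrt (V * L) * (L * R * q) := by ring
            _ = Real.sqrt (V * L) ^ 2 := by rw [e2]; ring
            _ = L * V := by rw [hsq]; ring
        exact mul_left_cancel₀ (by positivity) this
      linarith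
    linarith
  rw [abs_le]
  have ha := hgen 1 (by simp)
  have hb := hgen (-1) (by simp)
  constructor <;> linarith

/-- The tail bound for one choice of all parameters. -/
lemma single_tail {S A : Type} [Fintype S] [Fintype A]
    [DecidableEq S] [DecidableEq A] [MeasurableSpace S] [MeasurableSingletonClass S]
    [MeasurableSpace A] [MeasurableSingletonClass A]
    (M : MDP S A) (K : ℕ) (Ω : Type) (m0 : MeasurableSpace Ω) (μ : Measure Ω)
    [IsProbabilityMeasure μ] (𝓕 : Filtration ℕ m0)
    (st : ℕ → ℕ → Ω → S) (ac : ℕ → ℕ → Ω → A)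
    (W : ℕ → Ω → S → ℝ) (u : ℕ → Ω → ℝ) (Cw Cu : ℝ)
    (hT : IsMDPTrajectory μ M K 𝓕 st ac) (h : ℕ) (hh : h ∈ Icc 1 M.H) (s : S) (a : A)
    (hW : ∀ i ∈ Icc 1 K, ∀ s' : S, Measurable[𝓕 ((i - 1) * M.H + h)] (fun ω => W i ω s'))
    (hWb : ∀ i ω, ∀ s' : S, |W i ω s'| ≤ Cw)
    (hu : ∀ i ∈ Icc 1 K, Measurable[𝓕 ((i - 1) * M.H + (h - 1))] (u i))
    (hub : ∀ i ω, 0 ≤ u i ω ∧ u i ω ≤ Cu)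
    (l L : ℝ) (hl : |l| * (2 * (Cu * Cw)) ≤ 1) (k : ℕ) (hk : k ≤ K) :
    μ {ω | L ≤ l * (∑ i ∈ Icc 1 k, u i ω * ((W i ω (st i (h + 1) ω)
                      - ∑ s', M.P h s a s' * W i ω s')
                    * (if st i h ω = s ∧ ac i h ω = a then (1 : ℝ) else 0)))
              - l ^ 2 * ∑ i ∈ Icc 1 k, u i ω ^ 2 * (M.varP h s a (W i ω)
                    * (if st i h ω = s ∧ ac i h ω = a then (1 : ℝ) else 0))}
      ≤ ENNReal.ofReal (Real.exp (-L)) := by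
  obtain ⟨hst, hac, hP⟩ := hT
  have hh' := Finset.mem_Icc.1 hh
  have hCw : 0 ≤ Cw := by
    have : Nonempty Ω := by
      by_contra hne
      rw [not_nonempty_iff] at hne
      have := measure_univ (μ := μ)
      rw [Set.univ_eq_empty_iff.2 hne, measure_empty] at this
      exact zero_ne_one this
    exact (abs_nonneg _).trans (hWb 0 (Classical.arbitrary Ω) s)
  let ind : ℕ → Ω → ℝ := fun i ω => if st i h ω = s ∧ ac i h ω = a then (1 : ℝ) else 0
  let E : ℕ → Ω → S → ℝ := fun i ω x =>
    ((l * u i ω) * (W i ω x - ∑ s', M.P h s a s' * W i ω s')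
      - (l * u i ω) ^ 2 * M.varP h s a (W i ω)) * ind i ω
  have hlu : ∀ i ω, |l * u i ω| * (2 * Cw) ≤ 1 := by
    intro i ω
    rw [abs_mul, abs_of_nonneg (hub i ω).1]
    calc |l| * u i ω * (2 * Cw) ≤ |l| * Cu * (2 * Cw) := by
          have := (hub i ω).2
          gcongr
      _ ≤ 1 := by linarith
  have hdev : ∀ i ω x, |(l * u i ω) * (W i ω x - ∑ s', M.P h s a s' * W i ω s')| ≤ 1 := by
    intro i ω x
    rw [abs_mul]
    refine le_trans (mul_le_mul_of_nonneg_left ?_ (abs_nonneg _)) (hlu i ω)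
    have h1 := hWb i ω x
    have h2 := abs_mean_le M h s a (W i ω) Cw (hWb i ω)
    have h3 := abs_sub (W i ω x) (∑ s', M.P h s a s' * W i ω s')
    linarith
  have hvar : ∀ i ω, (l * u i ω) ^ 2 * M.varP h s a (W i ω) ≤ 1 := by
    intro i ω
    have h1 := varP_le M h s a (W i ω) Cw (hWb i ω)
    calc (l * u i ω) ^ 2 * M.varP h s a (W i ω) ≤ (l * u i ω) ^ 2 * Cw ^ 2 := by gcongr
      _ = (|l * u i ω| * Cw) ^ 2 := by rw [mul_pow |l * u i ω|, sq_abs]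
      _ ≤ 1 := by
          have h2 := hlu i ω
          have h3 : 0 ≤ |l * u i ω| * Cw := by positivity
          apply pow_le_one₀ h3
          linarith
  have hEb : ∀ i ω x, |E i ω x| ≤ 2 := by
    intro i ω x
    have h1 := abs_le.1 (hdev i ω x)
    have h2 := hvar i ω
    have h3 : 0 ≤ (l * u i ω) ^ 2 * M.varP h s a (W i ω) :=
      mul_nonneg (sq_nonneg _) (varP_nonneg _ _ _ _ _)
    simp only [E, ind]
    split_ifs
    · rw [mul_one, abs_le]; constructor <;> linarith [h1.1, h1.2]
    · simp
  have hle : ∀ i ω, ∑ x, M.P h (st i h ω) (ac i h ω) x * Real.exp (E i ω x) ≤ 1 := by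
    intro i ω
    simp only [E, ind]
    split_ifs with hc
    · rw [hc.1, hc.2]
      simp only [mul_one]
      exact one_step_mgf M h s a (W i ω) (l * u i ω) (hdev i ω)
    · simp [M.P_sum_one]
  have hEm : ∀ i ∈ Icc 1 K, ∀ x, Measurable[𝓕 ((i - 1) * M.H + h)] (fun ω => E i ω x) := by
    intro i hi x
    have hu' : Measurable[𝓕 ((i - 1) * M.H + h)] (u i) :=
      (hu i hi).mono (𝓕.mono (by omega)) le_rfl
    have hs : MeasurableSet[𝓕 ((i - 1) * M.H + h)] {ω | st i h ω = s ∧ ac i h ω = a} :=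
      MeasurableSet.inter
        (hst i hi h (by simp only [mem_Icc]; omega) (measurableSet_singleton s))
        (hac i hi h hh (measurableSet_singleton a))
    have hmean : Measurable[𝓕 ((i - 1) * M.H + h)] (fun ω => ∑ s', M.P h s a s' * W i ω s') :=
      Finset.measurable_fun_sum _ fun s' _ => (hW i hi s').const_mul _
    have hv : Measurable[𝓕 ((i - 1) * M.H + h)] (fun ω => M.varP h s a (W i ω)) := by
      unfold MDP.varP
      exact (Finset.measurable_fun_sum _ fun s' _ => ((hW i hi s').pow_const 2).const_mul _).sub
        (hmean.pow_const 2)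
    refine Measurable.mul (Measurable.sub ((hu'.const_mul l).mul ((hW i hi x).sub hmean))
      (((hu'.const_mul l).pow_const 2).mul hv)) ?_
    exact Measurable.ite hs measurable_const measurable_const
  have hmain := exp_supermartingale μ 𝓕 (fun i => (i - 1) * M.H + h)
    (by
      intro i hi
      obtain ⟨j, rfl⟩ : ∃ j, i = j + 1 := ⟨i - 1, by omega⟩
      have := M.H_pos
      simp only [Nat.add_sub_cancel]
      rw [Nat.add_mul]; omega)
    K (fun i => st i (h + 1))
    (by
      intro i hi
      exact hst i hi (h + 1) (by simp only [mem_Icc]; omega))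
    (fun i ω x => M.P h (st i h ω) (ac i h ω) x) (fun i ω x => M.P_nonneg _ _ _ _)
    (fun i hi x => hP i hi h hh x) E hEm 2 hEb hle k hk
  have := chernoff_of_exp μ (fun ω => ∑ i ∈ Icc 1 k, E i ω (st i (h + 1) ω)) hmain.1 hmain.2 L
  convert this using 4 with ω
  rw [Finset.mul_sum, Finset.mul_sum, ← Finset.sum_sub_distrib]
  apply iff_of_eq
  congr 1
  refine Finset.sum_congr rfl fun i _ => ?_
  simp only [E, ind]
  ring

/-- Counting the events in the union bound. -/
lemma count_bound (S A K H δ : ℝ) (hS : 2 ≤ S) (hA : 1 ≤ A) (hK : 1 ≤ K) (hH : 1 ≤ H)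
    (hδ0 : 0 < δ) (hδ1 : δ < 1) :
    1 / 4 ≤ Real.log (S * A * (K * H) / δ) ∧
    K * (H * (S * (A * (K * ((K + 1) * 2)))))
      * Real.exp (-(4 * Real.log (S * A * (K * H) / δ))) ≤ δ := by
  set x := S * A * (K * H) with hx
  have hAKH : 1 ≤ A * (K * H) :=
    one_le_mul_of_one_le_of_one_le hA (one_le_mul_of_one_le_of_one_le hK hH)
  have hx2 : 2 ≤ x := by rw [hx]; nlinarith
  have hKx : K ≤ x / 2 := by
    have h1 : K ≤ A * (K * H) := by
      have : 1 ≤ A * H := one_le_mul_of_one_le_of_one_le hA hH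
      nlinarith
    rw [hx]; nlinarith
  have hy2 : 2 ≤ x / δ := by
    rw [le_div_iff₀ hδ0]; nlinarith
  have hy0 : 0 < x / δ := by linarith
  constructor
  · have h1 := Real.log_le_log (by norm_num) hy2
    have h2 := Real.log_two_gt_d9
    linarith
  · have he : Real.exp (-(4 * Real.log (x / δ))) = ((x / δ) ^ 4)⁻¹ := by
      rw [Real.exp_neg]
      congr 1
      have : (4 : ℝ) * Real.log (x / δ) = Real.log ((x / δ) ^ 4) := by
        rw [Real.log_pow]; norm_num
      rw [this, Real.exp_log (by positivity)]
    rw [he, ← div_eq_mul_inv, div_le_iff₀ (by positivity)]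
    have h1 : K * (H * (S * (A * (K * ((K + 1) * 2))))) = x * (K * ((K + 1) * 2)) := by
      rw [hx]; ring
    rw [h1]
    have h2 : K * ((K + 1) * 2) ≤ x ^ 2 := by nlinarith
    have h3 : x * (K * ((K + 1) * 2)) ≤ x ^ 3 := by nlinarith
    have h4 : x ^ 3 ≤ x ^ 4 := pow_le_pow_right₀ (by linarith) (by norm_num)
    have h5 : δ * (x / δ) ^ 4 = x ^ 4 / δ ^ 3 := by field_simp
    have h6 : x ^ 4 ≤ x ^ 4 / δ ^ 3 := by
      rw [le_div_iff₀ (by positivity)]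
      have : δ ^ 3 ≤ 1 := pow_le_one₀ hδ0.le hδ1.le
      have : 0 ≤ x ^ 4 := by positivity
      nlinarith
    rw [h5]; linarith

lemma final_arith (Cu Cw ι Q V B X : ℝ) (hCu : 0 ≤ Cu) (hCw : 0 ≤ Cw) (hι : 1 / 4 ≤ ι)
    (hV : 0 ≤ V) (hVQ : V ≤ Cu * Q) (hB : 0 ≤ B)
    (hX : X ≤ 2 * Real.sqrt (V * (4 * ι)) + 4 * ι * (2 * (Cu * Cw))) :
    X ≤ 32 * (Real.sqrt (Cu * ι ^ 2) * Real.sqrt Q + (Cu * Cw + B * Cw) * ι ^ 2) := by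
  have h1 : Real.sqrt (V * (4 * ι)) ≤ 4 * (Real.sqrt (Cu * ι ^ 2) * Real.sqrt Q) := by
    rw [← Real.sqrt_mul (by positivity)]
    have h4 : (4 : ℝ) = Real.sqrt 16 := by
      rw [show (16 : ℝ) = 4 ^ 2 by norm_num, Real.sqrt_sq (by norm_num)]
    nth_rewrite 2 [h4]
    rw [← Real.sqrt_mul (by norm_num)]
    apply Real.sqrt_le_sqrt
    have h2 : V * (4 * ι) ≤ Cu * Q * (4 * ι) := by gcongr
    have h3 : 0 ≤ Cu * Q := hV.trans hVQ
    have h5 : 4 * ι ≤ 16 * ι ^ 2 := by nlinarith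
    have h6 := mul_le_mul_of_nonneg_left h5 h3
    linarith
  have h2 : ι ≤ 4 * ι ^ 2 := by nlinarith
  have h3 := mul_le_mul_of_nonneg_left h2 (mul_nonneg hCu hCw)
  have h4 : 0 ≤ B * Cw * ι ^ 2 := by positivity
  have h5 : 0 ≤ Real.sqrt (Cu * ι ^ 2) * Real.sqrt Q := by positivity
  nlinarith

/-- **Freedman-type concentration for visit-indexed martingales** (Lemma 7 of the paper).
Let `(s_h^k, a_h^k)` be an episodic trajectory generated by the MDP `M` (adapted to the
filtration `𝓕`, with time index `(i-1)H + h` corresponding to step `h` of episode `i`).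
Let `W_h^i ∈ ℝ^S` be `𝓕((i-1)H + (h-1))`-measurable with `‖W_h^i‖_∞ ≤ C_w`, and let
`u_h^i(s,a,N)` be `𝓕((i-1)H + (h-1))`-measurable with `0 ≤ u_h^i(s,a,N) ≤ C_u` and
`0 ≤ ∑_{n=1}^{N_h^k(s,a)} u_h^{k_h^n(s,a)}(s,a,N) ≤ 2`.  Set
`X_i(s,a,h,N) = u_h^i(s,a,N) (P_h^i - P_{h,s,a}) W_{h+1}^i 1{(s_h^i,a_h^i) = (s,a)}`.
Then there is a universal constant `C > 0` such that with probability at least `1 - δ`,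
simultaneously for all `(k,h,s,a,N) ∈ [K] × [H] × S × A × [K]`,
`|∑_{i=1}^k X_i(s,a,h,N)| ≤ C (√(C_u log²(SAT/δ))
   √(∑_{n=1}^{N_h^k(s,a)} u_h^{k_h^n(s,a)}(s,a,N) Var_{h,s,a}(W_{h+1}^{k_h^n(s,a)}))
   + (C_u C_w + √(C_u/N) C_w) log²(SAT/δ))`. -/
theorem freedman_union_bound_visit_indexed :
    ∃ C : ℝ, 0 < C ∧
      ∀ (S A : Type) [Fintype S] [Fintype A] [Nonempty S] [Nonempty A]
        [DecidableEq S] [DecidableEq A]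
        [MeasurableSpace S] [MeasurableSingletonClass S]
        [MeasurableSpace A] [MeasurableSingletonClass A]
        (M : MDP S A) (K : ℕ)
        (Ω : Type) (m0 : MeasurableSpace Ω) (μ : Measure Ω)
        (𝓕 : Filtration ℕ m0)
        (st : ℕ → ℕ → Ω → S) (ac : ℕ → ℕ → Ω → A)
        (W : ℕ → ℕ → Ω → S → ℝ) (u : ℕ → ℕ → S → A → ℕ → Ω → ℝ)
        (Cw Cu δ : ℝ),
        IsProbabilityMeasure μ → 0 < δ → δ < 1 → 1 ≤ K →
        IsMDPTrajectory μ M K 𝓕 st ac →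
        (∀ i ∈ Icc 1 K, ∀ h ∈ Icc 1 (M.H + 1), ∀ s' : S,
          Measurable[𝓕 ((i - 1) * M.H + (h - 1))] (fun ω => W h i ω s')) →
        (∀ h i ω, ∀ s' : S, |W h i ω s'| ≤ Cw) →
        (∀ i ∈ Icc 1 K, ∀ h ∈ Icc 1 M.H, ∀ (s : S) (a : A) (Nval : ℕ),
          Measurable[𝓕 ((i - 1) * M.H + (h - 1))] (u h i s a Nval)) →
        (∀ h i s a Nval ω, 0 ≤ u h i s a Nval ω ∧ u h i s a Nval ω ≤ Cu) →
        (∀ ω, ∀ k ∈ Icc 1 K, ∀ h ∈ Icc 1 M.H, ∀ (s : S) (a : A), ∀ Nval ∈ Icc 1 K,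
          0 ≤ (∑ n ∈ Icc 1 (Nvisit (fun k' h' => st k' h' ω) (fun k' h' => ac k' h' ω) k h s a),
                u h (kvisit (fun k' h' => st k' h' ω) (fun k' h' => ac k' h' ω) n h s a)
                  s a Nval ω) ∧
          (∑ n ∈ Icc 1 (Nvisit (fun k' h' => st k' h' ω) (fun k' h' => ac k' h' ω) k h s a),
              u h (kvisit (fun k' h' => st k' h' ω) (fun k' h' => ac k' h' ω) n h s a)
                s a Nval ω) ≤ 2) →
        1 - δ ≤ (μ {ω | ∀ k ∈ Icc 1 K, ∀ h ∈ Icc 1 M.H, ∀ (s : S) (a : A), ∀ Nval ∈ Icc 1 K,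
            |∑ i ∈ Icc 1 k, u h i s a Nval ω
                * ((W (h + 1) i ω (st i (h + 1) ω)
                      - ∑ s', M.P h s a s' * W (h + 1) i ω s')
                    * (if st i h ω = s ∧ ac i h ω = a then (1 : ℝ) else 0))|
              ≤ C * (Real.sqrt (Cu * (iota S A K M.H δ) ^ 2)
                  * Real.sqrt (∑ n ∈ Icc 1 (Nvisit (fun k' h' => st k' h' ω)
                        (fun k' h' => ac k' h' ω) k h s a),
                      u h (kvisit (fun k' h' => st k' h' ω) (fun k' h' => ac k' h' ω)
                            n h s a) s a Nval ω
                        * M.varP h s a (fun s' =>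
                            W (h + 1) (kvisit (fun k' h' => st k' h' ω)
                              (fun k' h' => ac k' h' ω) n h s a) ω s'))
                + (Cu * Cw + Real.sqrt (Cu / Nval) * Cw)
                    * (iota S A K M.H δ) ^ 2)}).toReal := by
  refine ⟨32, by norm_num, ?_⟩
  intro S A _ _ _ _ _ _ _ _ _ _ M K Ω m0 μ 𝓕 st ac W u Cw Cu δ hμ hδ0 hδ1 hK hT hW hWb hu hub _
  have hne : Nonempty Ω := by
    by_contra hne
    rw [not_nonempty_iff] at hne
    have := measure_univ (μ := μ)
    rw [Set.univ_eq_empty_iff.2 hne, measure_empty] at this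
    exact zero_ne_one this
  have hCw : 0 ≤ Cw :=
    (abs_nonneg _).trans (hWb 0 0 (Classical.arbitrary Ω) (Classical.arbitrary S))
  have hCu : 0 ≤ Cu := by
    have := hub 0 0 (Classical.arbitrary S) (Classical.arbitrary A) 0 (Classical.arbitrary Ω)
    exact this.1.trans this.2
  set ι := iota S A K M.H δ with hι
  -- trivial case
  by_cases htriv : Fintype.card S ≤ 1 ∨ Cu * Cw = 0
  · have hX0 : ∀ ω h i s a N, u h i s a N ω * ((W (h + 1) i ω (st i (h + 1) ω)
                      - ∑ s', M.P h s a s' * W (h + 1) i ω s')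
                    * (if st i h ω = s ∧ ac i h ω = a then (1 : ℝ) else 0)) = 0 := by
      intro ω h i s a N
      rcases htriv with h1 | h1
      · have hsub : Subsingleton S := Fintype.card_le_one_iff_subsingleton.1 h1
        have : ∑ s', M.P h s a s' * W (h + 1) i ω s' = W (h + 1) i ω (st i (h + 1) ω) := by
          calc _ = ∑ s', M.P h s a s' * W (h + 1) i ω (st i (h + 1) ω) :=
                Finset.sum_congr rfl fun s' _ => by
                  rw [Subsingleton.elim s' (st i (h + 1) ω)]
            _ = _ := by rw [← Finset.sum_mul, M.P_sum_one, one_mul]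
        rw [this]; simp
      · rcases mul_eq_zero.1 h1 with h2 | h2
        · have h3 := hub h i s a N ω
          rw [h2] at h3
          rw [le_antisymm h3.2 h3.1]; simp
        · have h3 : ∀ s', W (h + 1) i ω s' = 0 := fun s' => by
            have := hWb (h + 1) i ω s'
            rw [h2] at this
            exact abs_nonpos_iff.1 this
          simp [h3]
    have huniv : ∀ G : Set Ω, G = Set.univ → 1 - δ ≤ (μ G).toReal := by
      intro G hG
      rw [hG, measure_univ]; simp; linarith
    apply huniv
    rw [Set.eq_univ_iff_forall]
    intro ω k _ h _ s a N _
    rw [Finset.sum_eq_zero fun i _ => hX0 ω h i s a N, abs_zero]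
    positivity
  push Not at htriv
  obtain ⟨hS2, hCC⟩ := htriv
  have hR : 0 < 2 * (Cu * Cw) := by
    have : 0 ≤ Cu * Cw := mul_nonneg hCu hCw
    have := lt_of_le_of_ne this (Ne.symm hCC)
    linarith
  have hS2' : (2 : ℝ) ≤ Fintype.card S := by exact_mod_cast hS2
  have hA1 : (1 : ℝ) ≤ Fintype.card A := by exact_mod_cast Fintype.card_pos
  have hK1 : (1 : ℝ) ≤ K := by exact_mod_cast hK
  have hH1 : (1 : ℝ) ≤ M.H := by exact_mod_cast M.H_pos
  obtain ⟨hι1, hcount⟩ := count_bound (Fintype.card S) (Fintype.card A) K M.H δ hS2' hA1 hK1 hH1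
    hδ0 hδ1
  change 1 / 4 ≤ ι at hι1
  set L := 4 * ι with hL
  set I : Finset (ℕ × ℕ × S × A × ℕ × ℕ × ℝ) :=
    Icc 1 K ×ˢ Icc 1 M.H ×ˢ univ ×ˢ univ ×ˢ Icc 1 K ×ˢ Icc 1 (K + 1) ×ˢ {1, -1} with hI
  let Xf : ℕ → ℕ → S → A → ℕ → Ω → ℝ := fun k h s a N ω =>
    ∑ i ∈ Icc 1 k, u h i s a N ω * ((W (h + 1) i ω (st i (h + 1) ω)
                      - ∑ s', M.P h s a s' * W (h + 1) i ω s')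
                    * (if st i h ω = s ∧ ac i h ω = a then (1 : ℝ) else 0))
  let Vf : ℕ → ℕ → S → A → ℕ → Ω → ℝ := fun k h s a N ω =>
    ∑ i ∈ Icc 1 k, u h i s a N ω ^ 2 * (M.varP h s a (W (h + 1) i ω)
                    * (if st i h ω = s ∧ ac i h ω = a then (1 : ℝ) else 0))
  let Bad : ℕ × ℕ × S × A × ℕ × ℕ × ℝ → Set Ω := fun x =>
    {ω | L ≤ (x.2.2.2.2.2.2 / (2 * (Cu * Cw) * x.2.2.2.2.2.1))
              * Xf x.1 x.2.1 x.2.2.1 x.2.2.2.1 x.2.2.2.2.1 ω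
            - (x.2.2.2.2.2.2 / (2 * (Cu * Cw) * x.2.2.2.2.2.1)) ^ 2
              * Vf x.1 x.2.1 x.2.2.1 x.2.2.2.1 x.2.2.2.2.1 ω}
  have hBad : ∀ x ∈ I, μ (Bad x) ≤ ENNReal.ofReal (Real.exp (-L)) := by
    rintro ⟨k, h, s, a, N, j, σ⟩ hx
    simp only [hI, mem_product, mem_univ, true_and] at hx
    obtain ⟨hk, hh, hN, hj, hσ⟩ := hx
    have hh' := mem_Icc.1 hh
    refine single_tail M K Ω m0 μ 𝓕 st ac (W (h + 1)) (fun i => u h i s a N) Cw Cu hT h hh s a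
      ?_ (fun i ω s' => hWb (h + 1) i ω s') (fun i hi => hu i hi h hh s a N)
      (fun i ω => hub h i s a N ω) _ L ?_ k (mem_Icc.1 hk).2
    · intro i hi s'
      exact hW i hi (h + 1) (by simp only [mem_Icc]; omega) s'
    · have hj1 : (1 : ℝ) ≤ j := by exact_mod_cast (mem_Icc.1 hj).1
      have hσ1 : |σ| = 1 := by
        simp only [mem_insert, mem_singleton] at hσ
        rcases hσ with h | h <;> rw [h] <;> simp
      have hpos : 0 < 2 * (Cu * Cw) * j := by positivity
      rw [abs_div, hσ1, abs_of_pos hpos, div_mul_eq_mul_div, div_le_one hpos, one_mul]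
      exact le_mul_of_one_le_right hR.le hj1
  have hUnion : μ (⋃ x ∈ I, Bad x) ≤ ENNReal.ofReal δ := by
    calc μ (⋃ x ∈ I, Bad x) ≤ ∑ x ∈ I, μ (Bad x) := measure_biUnion_finset_le _ _
      _ ≤ ∑ x ∈ I, ENNReal.ofReal (Real.exp (-L)) := Finset.sum_le_sum hBad
      _ = ENNReal.ofReal (I.card * Real.exp (-L)) := by
          rw [Finset.sum_const, nsmul_eq_mul, ENNReal.ofReal_mul (by positivity),
            ENNReal.ofReal_natCast]
      _ ≤ ENNReal.ofReal δ := by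
          apply ENNReal.ofReal_le_ofReal
          have hcard : (I.card : ℝ)
              = K * (M.H * (Fintype.card S * (Fintype.card A * (K * ((K + 1) * 2))))) := by
            have h2 : ({1, -1} : Finset ℝ).card = 2 := by
              rw [Finset.card_pair]; norm_num
            simp only [hI, Finset.card_product, h2, Nat.card_Icc, Finset.card_univ]
            push_cast
            simp
          rw [hcard]
          exact hcount
  have hsub : ∀ G : Set Ω, (∀ ω, (∀ x ∈ I, ω ∉ Bad x) → ω ∈ G) → 1 - δ ≤ (μ G).toReal := by
    intro G hG
    have hcov : (Set.univ : Set Ω) ⊆ G ∪ ⋃ x ∈ I, Bad x := by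
      intro ω _
      by_cases hb : ∀ x ∈ I, ω ∉ Bad x
      · exact Or.inl (hG ω hb)
      · right
        push Not at hb
        obtain ⟨x, hx, hxb⟩ := hb
        exact Set.mem_biUnion hx hxb
    have h1 : (1 : ENNReal) ≤ μ G + ENNReal.ofReal δ := by
      calc (1 : ENNReal) = μ Set.univ := measure_univ.symm
        _ ≤ μ (G ∪ ⋃ x ∈ I, Bad x) := measure_mono hcov
        _ ≤ μ G + μ (⋃ x ∈ I, Bad x) := measure_union_le _ _
        _ ≤ _ := by gcongr
    have h2 := ENNReal.toReal_mono (by simp [measure_ne_top]) h1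
    rw [ENNReal.toReal_add (measure_ne_top _ _) ENNReal.ofReal_ne_top,
      ENNReal.toReal_ofReal hδ0.le, ENNReal.toReal_one] at h2
    linarith
  apply hsub
  intro ω hω k hk h hh s a N hN
  have hre : (∑ n ∈ Icc 1 (Nvisit (fun k' h' => st k' h' ω)
                        (fun k' h' => ac k' h' ω) k h s a),
                      u h (kvisit (fun k' h' => st k' h' ω) (fun k' h' => ac k' h' ω)
                            n h s a) s a N ω
                        * M.varP h s a (fun s' =>
                            W (h + 1) (kvisit (fun k' h' => st k' h' ω)
                              (fun k' h' => ac k' h' ω) n h s a) ω s'))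
      = ∑ i ∈ Icc 1 k, (u h i s a N ω * M.varP h s a (W (h + 1) i ω))
          * (if st i h ω = s ∧ ac i h ω = a then (1 : ℝ) else 0) :=
    visit_sum_reindex (fun j => st j h ω = s ∧ ac j h ω = a)
      (fun i => u h i s a N ω * M.varP h s a (fun s' => W (h + 1) i ω s')) k
  rw [hre]
  set Q := ∑ i ∈ Icc 1 k, (u h i s a N ω * M.varP h s a (W (h + 1) i ω))
          * (if st i h ω = s ∧ ac i h ω = a then (1 : ℝ) else 0) with hQ
  have hind0 : ∀ i, (0 : ℝ) ≤ (if st i h ω = s ∧ ac i h ω = a then (1 : ℝ) else 0) := by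
    intro i; split_ifs <;> norm_num
  have hind1 : ∀ i, (if st i h ω = s ∧ ac i h ω = a then (1 : ℝ) else 0) ≤ (1 : ℝ) := by
    intro i; split_ifs <;> norm_num
  have hV0 : 0 ≤ Vf k h s a N ω :=
    Finset.sum_nonneg fun i _ => mul_nonneg (sq_nonneg _)
      (mul_nonneg (varP_nonneg _ _ _ _ _) (hind0 i))
  have hVQ : Vf k h s a N ω ≤ Cu * Q := by
    rw [hQ, Finset.mul_sum]
    refine Finset.sum_le_sum fun i _ => ?_
    have h1 := hub h i s a N ω
    have h2 := mul_nonneg (varP_nonneg M h s a (W (h + 1) i ω)) (hind0 i)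
    have h3 : u h i s a N ω ^ 2 ≤ Cu * u h i s a N ω := by
      rw [sq]; exact mul_le_mul_of_nonneg_right h1.2 h1.1
    have h4 := mul_le_mul_of_nonneg_right h3 h2
    linarith
  have hVK : Vf k h s a N ω ≤ K * (2 * (Cu * Cw)) ^ 2 := by
    calc Vf k h s a N ω ≤ ∑ i ∈ Icc 1 k, (2 * (Cu * Cw)) ^ 2 := by
          refine Finset.sum_le_sum fun i _ => ?_
          have h1 := hub h i s a N ω
          have h2 : u h i s a N ω ^ 2 ≤ Cu ^ 2 := pow_le_pow_left₀ h1.1 h1.2 2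
          have h3 : M.varP h s a (W (h + 1) i ω)
              * (if st i h ω = s ∧ ac i h ω = a then (1 : ℝ) else 0) ≤ Cw ^ 2 := by
            calc _ ≤ M.varP h s a (W (h + 1) i ω) * 1 :=
                  mul_le_mul_of_nonneg_left (hind1 i) (varP_nonneg _ _ _ _ _)
              _ ≤ Cw ^ 2 := by
                  rw [mul_one]; exact varP_le _ _ _ _ _ _ (hWb (h + 1) i ω)
          have h4 := mul_le_mul h2 h3 (mul_nonneg (varP_nonneg _ _ _ _ _) (hind0 i))
            (sq_nonneg Cu)
          refine h4.trans ?_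
          nlinarith [sq_nonneg (Cu * Cw)]
      _ = k * (2 * (Cu * Cw)) ^ 2 := by simp
      _ ≤ _ := by
          have : (k : ℝ) ≤ K := by exact_mod_cast (mem_Icc.1 hk).2
          gcongr
  have hgrid := grid_opt K (Vf k h s a N ω) (2 * (Cu * Cw)) L (Xf k h s a N ω) hV0 hR
    (by rw [hL]; linarith) hVK (by
      intro j hj σ hσ
      have hmem : (k, h, s, a, N, j, σ) ∈ I := by
        simp only [hI, mem_product, mem_univ, true_and]
        exact ⟨hk, hh, hN, hj, hσ⟩
      have := hω _ hmem
      simp only [Bad, Set.mem_ofPred_eq, not_le] at this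
      exact this)
  change |Xf k h s a N ω| ≤ _
  exact final_arith _ _ _ _ _ _ _ hCu hCw hι1 hV0 hVQ (Real.sqrt_nonneg _) hgrid
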